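/- arXiv:1601.05770 — 6 statements merged into one kernel-verified Lean document; each statement's English description precedes it below -/
import Mathlib

section
/- Yang–Baxter equation for the higher spin six vertex weights. Let q, s, u₁, u₂ ∈ ℂ with s·u₁ ≠ 1 and s·u₂ ≠ 1, and let m, n ∈ ℤ_{≥0}. Define the two-vertex weights w^{(m,n)}_{u₁,u₂;s}(k₁,k₂;k₁',k₂') := Σ_{l≥0} w_{u₁,s}(m,k₁;l,k₁')·w_{u₂,s}(l,k₂;n,k₂') for k₁,k₂,k₁',k₂' ∈ {0,1} (at most one summand is nonzero), and the transposed weights w̃^{(m,n)}_{u₁,u₂;s}(k₁,k₂;k₁',k₂') := w^{(m,n)}_{u₁,u₂;s}(k₂,k₁;k₂',k₁'). Regard these as 4×4 complex matrices with rows indexed by (k₁,k₂) and columns by (k₁',k₂'), in the order (0,0),(0,1),(1,0),(1,1), and let X be the 4×4 matrix with rows [u₁−qu₂, 0, 0, 0], [0, q(u₁−u₂), (1−q)u₁, 0], [0, (1−q)u₂, u₁−u₂, 0], [0, 0, 0, u₁−qu₂]. Then w̃^{(m,n)}_{u₂,u₁;s} · X = X · w^{(m,n)}_{u₁,u₂;s}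 (equivalently, w̃^{(m,n)}_{u₂,u₁;s} = X · w^{(m,n)}_{u₁,u₂;s} · X^{−1} whenever X is invertible). In particular X is independent of m, n and of s. -/
noncomputable section

open Finset

/-- Vertex weights `w_{u,s}(i₁, j₁; i₂, j₂)` of the higher spin six vertex model. -/
def vw (q u s : ℂ) (i₁ j₁ i₂ j₂ : ℕ) : ℂ :=
  if j₁ = 0 ∧ j₂ = 0 ∧ i₂ = i₁ then (1 - s * q ^ i₁ * u) / (1 - s * u)
  else if j₁ = 0 ∧ j₂ = 1 ∧ i₁ = i₂ + 1 then (1 - s ^ 2 * q ^ i₂) * u / (1 - s * u)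
  else if j₁ = 1 ∧ j₂ = 1 ∧ i₂ = i₁ then (u - s * q ^ i₁) / (1 - s * u)
  else if j₁ = 1 ∧ j₂ = 0 ∧ i₂ = i₁ + 1 then (1 - q ^ (i₁ + 1)) / (1 - s * u)
  else 0

/-- Two-vertex weights `w^{(m,n)}_{u₁,u₂;s}(k₁,k₂;k₁',k₂')`, organized as a `4×4` matrix
with rows indexed by `(k₁,k₂)` and columns by `(k₁',k₂')`. -/
def twoVertex (q s u₁ u₂ : ℂ) (m n : ℕ) : Matrix (Fin 2 × Fin 2) (Fin 2 × Fin 2) ℂ :=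
  Matrix.of fun kk kk' =>
    ∑' l : ℕ, vw q u₁ s m (kk.1 : ℕ) l (kk'.1 : ℕ) * vw q u₂ s l (kk.2 : ℕ) n (kk'.2 : ℕ)

/-- Transposed two-vertex weights `w̃^{(m,n)}_{u₁,u₂;s}(k₁,k₂;k₁',k₂')
    = w^{(m,n)}_{u₁,u₂;s}(k₂,k₁;k₂',k₁')`. -/
def twoVertexT (q s u₁ u₂ : ℂ) (m n : ℕ) : Matrix (Fin 2 × Fin 2) (Fin 2 × Fin 2) ℂ :=
  Matrix.of fun kk kk' => twoVertex q s u₁ u₂ m n (kk.2, kk.1) (kk'.2, kk'.1)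

/-- The conjugating matrix `X`, with rows
`[u₁−qu₂, 0, 0, 0], [0, q(u₁−u₂), (1−q)u₁, 0], [0, (1−q)u₂, u₁−u₂, 0], [0, 0, 0, u₁−qu₂]`
in the index order `(0,0), (0,1), (1,0), (1,1)`. -/
def Xmat (q u₁ u₂ : ℂ) : Matrix (Fin 2 × Fin 2) (Fin 2 × Fin 2) ℂ :=
  Matrix.of fun p p' =>
    if p = (0, 0) ∧ p' = (0, 0) then u₁ - q * u₂
    else if p = (0, 1) ∧ p' = (0, 1) then q * (u₁ - u₂)
    else if p = (0, 1) ∧ p' = (1, 0) then (1 - q) * u₁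
    else if p = (1, 0) ∧ p' = (0, 1) then (1 - q) * u₂
    else if p = (1, 0) ∧ p' = (1, 0) then u₁ - u₂
    else if p = (1, 1) ∧ p' = (1, 1) then u₁ - q * u₂
    else 0

/-- Arrow conservation: a vertex weight vanishes unless `l = m + j₁ - j₂`. -/
lemma vw_eq_zero (q u s : ℂ) {m j₁ l j₂ : ℕ} (h : l ≠ m + j₁ - j₂) : vw q u s m j₁ l j₂ = 0 := by
  unfold vw
  split_ifs <;> first | rfl | omega

lemma twoVertex_apply (q s u₁ u₂ : ℂ) (m n : ℕ) (a b c d : Fin 2) :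
    twoVertex q s u₁ u₂ m n (a, b) (c, d) =
      vw q u₁ s m a (m + a - c) c * vw q u₂ s (m + a - c) b n d :=
  tsum_eq_single _ fun l hl => by
    simp only [vw_eq_zero q u₁ s hl, zero_mul]

/-- **Yang–Baxter equation** for the higher spin six vertex weights:
`w̃^{(m,n)}_{u₂,u₁;s} · X = X · w^{(m,n)}_{u₁,u₂;s}`.  In particular `X` does not depend on
`m`, `n`, or `s`. -/
theorem statement0 (q s u₁ u₂ : ℂ) (h₁ : s * u₁ ≠ 1) (h₂ : s * u₂ ≠ 1) (m n : ℕ) :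
    twoVertexT q s u₂ u₁ m n * Xmat q u₁ u₂ = Xmat q u₁ u₂ * twoVertex q s u₁ u₂ m n := by
  have hu₁ : 1 - s * u₁ ≠ 0 := sub_ne_zero.mpr h₁.symm
  have hu₂ : 1 - s * u₂ ≠ 0 := sub_ne_zero.mpr h₂.symm
  ext ⟨a, b⟩ ⟨c, d⟩
  simp only [Matrix.mul_apply, Fintype.sum_prod_type, Fin.sum_univ_two, twoVertexT, Matrix.of_apply,
    twoVertex_apply]
  rcases m with _ | m <;> fin_cases a <;> fin_cases b <;> fin_cases c <;> fin_cases d <;>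
    simp [Xmat, vw] <;> split_ifs <;> (try subst_vars) <;> (try omega) <;>
    (try field_simp) <;> (try ring)

end
end

section
/- Preservation of q-exchangeability by a column of stochastic vertices (the key step of fusion). Let J ≥ 1, i₁ ∈ ℤ_{≥0}, and q, s, u ∈ ℂ with s q^{r−1} u ≠ 1 for all 1 ≤ r ≤ J. If P₁ : {0,1}^J → ℂ is q-exchangeable, then so is the function P₂ : {0,1}^J → ℂ defined by P₂(h⃗₂) := Σ_{h⃗₁ ∈ {0,1}^J} P₁(h⃗₁) · T(i₁; h⃗₁ → h⃗₂). In words: stacking vertically J vertices with spectral parameters u, qu, …, q^{J−1}u and stochastic weights L maps q-exchangeable distributions of the incoming horizontal arrows (h⃗₁) to q-exchangeable distributions of the outgoing horizontal arrows (h⃗₂). -/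
noncomputable section

open Finset

/-- Stochastic vertex weights `L_{u,s}(i₁, j₁; i₂, j₂)`. -/
def Lw (q u s : ℂ) (i₁ j₁ i₂ j₂ : ℕ) : ℂ :=
  if j₁ = 0 ∧ j₂ = 0 ∧ i₂ = i₁ then (1 - s * q ^ i₁ * u) / (1 - s * u)
  else if j₁ = 0 ∧ j₂ = 1 ∧ i₁ = i₂ + 1 then (-(s * u) + s * q ^ i₁ * u) / (1 - s * u)
  else if j₁ = 1 ∧ j₂ = 1 ∧ i₂ = i₁ then (-(s * u) + s ^ 2 * q ^ i₁) / (1 - s * u)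
  else if j₁ = 1 ∧ j₂ = 0 ∧ i₂ = i₁ + 1 then (1 - s ^ 2 * q ^ i₁) / (1 - s * u)
  else 0

/-- The occupation numbers `l⁽ʳ⁾` of the inner vertical edges:
`l⁽⁰⁾ = i₁` and `l⁽ʳ⁾ = l⁽ʳ⁻¹⁾ + h₁⁽ʳ⁾ − h₂⁽ʳ⁾`. -/
def lseq (i₁ : ℕ) (a b : ℕ → ℕ) : ℕ → ℤ
  | 0 => (i₁ : ℤ)
  | r + 1 => lseq i₁ a b r + (a r : ℤ) - (b r : ℤ)

/-- Extension of `h : Fin J → Fin 2` to a function `ℕ → ℕ` (by `0`). -/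
def fext {J : ℕ} (h : Fin J → Fin 2) (r : ℕ) : ℕ :=
  if hr : r < J then (h ⟨r, hr⟩ : ℕ) else 0

/-- Column transfer weight `T(i₁; h⃗₁ → h⃗₂)`: the product of the stochastic vertex weights
of a vertical column of `J` vertices with spectral parameters `u, qu, …, q^{J−1}u`; it is
`0` if some inner occupation number `l⁽ʳ⁾` is negative. -/
def colT (q s u : ℂ) (J : ℕ) (i₁ : ℕ) (h₁ h₂ : Fin J → Fin 2) : ℂ :=
  if ∀ r ∈ Finset.range (J + 1), 0 ≤ lseq i₁ (fext h₁) (fext h₂) r then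
    ∏ r ∈ Finset.range J,
      Lw q (q ^ r * u) s (lseq i₁ (fext h₁) (fext h₂) r).toNat (fext h₁ r)
        (lseq i₁ (fext h₁) (fext h₂) (r + 1)).toNat (fext h₂ r)
  else 0

/-- A function `P : {0,1}^J → ℂ` is `q`-exchangeable if for every `h⃗` with `h⁽ʳ⁾ = 1` and
`h⁽ʳ⁺¹⁾ = 0` one has `P(σ_r h⃗) = q · P(h⃗)`, where `σ_r` swaps coordinates `r` and `r+1`. -/
def IsQExch (q : ℂ) {J : ℕ} (P : (Fin J → Fin 2) → ℂ) : Prop :=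
  ∀ (h : Fin J → Fin 2) (r : ℕ) (hr : r + 1 < J),
    h ⟨r, Nat.lt_of_succ_lt hr⟩ = 1 → h ⟨r + 1, hr⟩ = 0 →
      P (fun i => h (Equiv.swap ⟨r, Nat.lt_of_succ_lt hr⟩ ⟨r + 1, hr⟩ i)) = q * P h

/-- The joint weight of two consecutive vertices with spectral parameters `u` and `q * u`, with
`l` paths entering from below, incoming arrows `a, a'` and outgoing arrows `b, b'`. -/
def pairWeight (q u s : ℂ) (l : ℤ) (a a' b b' : ℕ) : ℂ :=
  if 0 ≤ l + a - b then
    Lw q u s l.toNat a (l + a - b).toNat b *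
      Lw q (q * u) s (l + a - b).toNat a' (l + a - b + a' - b').toNat b'
  else 0

lemma pairWeight_zero_zero (q u s : ℂ) {l : ℤ} (hl : 1 ≤ l) :
    pairWeight q u s l 0 0 0 1 = q * pairWeight q u s l 0 0 1 0 := by
  obtain ⟨n, rfl⟩ : ∃ n : ℕ, l = n + 1 := ⟨(l - 1).toNat, by omega⟩
  have e : ((n : ℤ) + 1).toNat = n + 1 := by omega
  have e0 : (0 : ℤ) ≤ n + 1 := by omega
  simp [pairWeight, Lw, e, e0]
  ring

lemma pairWeight_one_one (q u s : ℂ) {l : ℤ} (hl : 0 ≤ l) :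
    pairWeight q u s l 1 1 0 1 = q * pairWeight q u s l 1 1 1 0 := by
  obtain ⟨n, rfl⟩ := Int.eq_ofNat_of_zero_le hl
  have e : ((n : ℤ) + 1).toNat = n + 1 := by omega
  have e0 : (0 : ℤ) ≤ n + 1 := by omega
  simp [pairWeight, Lw, e, e0]
  ring

lemma pairWeight_mixed (q u s : ℂ) {l : ℤ} (hl : 0 ≤ l) :
    q * pairWeight q u s l 0 1 0 1 + pairWeight q u s l 1 0 0 1 =
      q * (q * pairWeight q u s l 0 1 1 0 + pairWeight q u s l 1 0 1 0) := by
  obtain ⟨n, rfl⟩ := Int.eq_ofNat_of_zero_le hl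
  cases n with
  | zero =>
    simp [pairWeight, Lw]
    ring
  | succ n =>
    have e1 : ((n : ℤ) + 1).toNat = n + 1 := by omega
    have e2 : ((n : ℤ) + 1 + 1).toNat = n + 2 := by omega
    have e3 : (0 : ℤ) ≤ n + 1 := by omega
    have e4 : (0 : ℤ) ≤ n + 1 + 1 := by omega
    simp [pairWeight, Lw, e1, e2, e3, e4]
    ring

/-- The part of the column weight not involving the vertices `r` and `r + 1`. -/
def colRest (q s u : ℂ) (J i r : ℕ) (a b : ℕ → ℕ) : ℂ :=
  if ∀ k ∈ (range (J + 1)).erase (r + 1), 0 ≤ lseq i a b k then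
    ∏ k ∈ ((range J).erase r).erase (r + 1),
      Lw q (q ^ k * u) s (lseq i a b k).toNat (a k) (lseq i a b (k + 1)).toNat (b k)
  else 0

lemma colT_eq_colRest_mul (q s u : ℂ) {J r : ℕ} (hr : r + 1 < J) (i : ℕ)
    (h₁ h₂ : Fin J → Fin 2) :
    colT q s u J i h₁ h₂ = colRest q s u J i r (fext h₁) (fext h₂) *
      pairWeight q (q ^ r * u) s (lseq i (fext h₁) (fext h₂) r)
        (fext h₁ r) (fext h₁ (r + 1)) (fext h₂ r) (fext h₂ (r + 1)) := by
  unfold colT colRest pairWeight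
  generalize fext h₁ = a
  generalize fext h₂ = b
  have hmem : r + 1 ∈ range (J + 1) := by simp; omega
  have hsplit : (∀ k ∈ range (J + 1), 0 ≤ lseq i a b k) ↔
      (∀ k ∈ (range (J + 1)).erase (r + 1), 0 ≤ lseq i a b k) ∧
        0 ≤ lseq i a b r + a r - b r := by
    rw [← Finset.insert_erase hmem, Finset.forall_mem_insert, Finset.erase_insert_eq_erase,
      Finset.erase_idem, and_comm]
    rfl
  by_cases hG : ∀ k ∈ (range (J + 1)).erase (r + 1), 0 ≤ lseq i a b k
  · by_cases h0 : 0 ≤ lseq i a b r + a r - b r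
    · rw [if_pos (hsplit.2 ⟨hG, h0⟩), if_pos hG, if_pos h0,
        ← Finset.mul_prod_erase (range J) _ (a := r) (by simp; omega),
        ← Finset.mul_prod_erase ((range J).erase r) _ (a := r + 1) (by simp; omega)]
      simp only [lseq, pow_succ', mul_assoc]
      ring
    · rw [if_neg (fun h => h0 (hsplit.1 h).2), if_neg h0, mul_zero]
  · rw [if_neg (fun h => hG (hsplit.1 h).1), if_neg hG, zero_mul]

lemma lseq_nonneg_of_colRest_ne_zero {q s u : ℂ} {J i r : ℕ} {a b : ℕ → ℕ} (hr : r + 1 < J)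
    (h : colRest q s u J i r a b ≠ 0) : 0 ≤ lseq i a b r ∧ 0 ≤ lseq i a b (r + 2) := by
  unfold colRest at h
  split_ifs at h with hG
  · exact ⟨hG _ (by simp; omega), hG _ (by simp; omega)⟩
  · exact absurd rfl h

lemma lseq_comp_swap (i r : ℕ) (a b : ℕ → ℕ) {k : ℕ} (hk : k ≠ r + 1) :
    lseq i (a ∘ Equiv.swap r (r + 1)) b k = lseq i a b k := by
  induction k using Nat.strong_induction_on with
  | _ k ih =>
    rcases k with _ | k
    · rfl
    · by_cases h : k = r + 1
      · subst h
        simp only [lseq, Function.comp, Equiv.swap_apply_left, Equiv.swap_apply_right,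
          ih r (by omega) (by omega)]
        ring
      · simp only [lseq, Function.comp, ih k (by omega) h,
          Equiv.swap_apply_of_ne_of_ne (show k ≠ r by omega) h]

lemma lseq_eq_two_mul_sub (i : ℕ) (a b : ℕ → ℕ) (k : ℕ) :
    lseq i a b k = 2 * i - lseq i b a k := by
  induction k with
  | zero => simp only [lseq]; ring
  | succ k ih => simp only [lseq, ih]; ring

lemma lseq_comp_swap_right (i r : ℕ) (a b : ℕ → ℕ) {k : ℕ} (hk : k ≠ r + 1) :
    lseq i a (b ∘ Equiv.swap r (r + 1)) k = lseq i a b k := by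
  rw [lseq_eq_two_mul_sub, lseq_comp_swap i r b a hk, ← lseq_eq_two_mul_sub]

lemma colRest_congr (q s u : ℂ) (J i r : ℕ) {a a' b b' : ℕ → ℕ}
    (hl : ∀ k, k ≠ r + 1 → lseq i a b k = lseq i a' b' k)
    (ha : ∀ k, k ≠ r → k ≠ r + 1 → a k = a' k) (hb : ∀ k, k ≠ r → k ≠ r + 1 → b k = b' k) :
    colRest q s u J i r a b = colRest q s u J i r a' b' := by
  unfold colRest
  congr 1
  · refine propext (forall₂_congr fun k hk => ?_)
    rw [hl k (Finset.ne_of_mem_erase hk)]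
  · refine Finset.prod_congr rfl fun k hk => ?_
    have h1 : k ≠ r + 1 := Finset.ne_of_mem_erase hk
    have h2 : k ≠ r := Finset.ne_of_mem_erase (Finset.mem_of_mem_erase hk)
    rw [hl k h1, hl (k + 1) (by omega), ha k h2 h1, hb k h2 h1]

lemma comp_swap_apply_of_ne (a : ℕ → ℕ) (r k : ℕ) (h : k ≠ r) (h' : k ≠ r + 1) :
    (a ∘ Equiv.swap r (r + 1)) k = a k := by
  rw [Function.comp, Equiv.swap_apply_of_ne_of_ne h h']

lemma colRest_comp_swap_left (q s u : ℂ) (J i r : ℕ) (a b : ℕ → ℕ) :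
    colRest q s u J i r (a ∘ Equiv.swap r (r + 1)) b = colRest q s u J i r a b :=
  colRest_congr q s u J i r (fun _ => lseq_comp_swap i r a b) (comp_swap_apply_of_ne a r)
    (fun _ _ _ => rfl)

lemma colRest_comp_swap_right (q s u : ℂ) (J i r : ℕ) (a b : ℕ → ℕ) :
    colRest q s u J i r a (b ∘ Equiv.swap r (r + 1)) = colRest q s u J i r a b :=
  colRest_congr q s u J i r (fun _ => lseq_comp_swap_right i r a b) (fun _ _ _ => rfl)
    (comp_swap_apply_of_ne b r)

/-- The configuration `h` with the entries `r` and `r + 1` exchanged. -/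
abbrev swapAt {J r : ℕ} (hr : r + 1 < J) (h : Fin J → Fin 2) : Fin J → Fin 2 :=
  fun i => h (Equiv.swap ⟨r, Nat.lt_of_succ_lt hr⟩ ⟨r + 1, hr⟩ i)

lemma swapAt_swapAt {J r : ℕ} (hr : r + 1 < J) (h : Fin J → Fin 2) :
    swapAt hr (swapAt hr h) = h := by
  funext i
  simp [swapAt]

lemma fext_swapAt {J r : ℕ} (hr : r + 1 < J) (h : Fin J → Fin 2) :
    fext (swapAt hr h) = fext h ∘ Equiv.swap r (r + 1) := by
  funext k
  simp only [fext, swapAt, Function.comp, Equiv.swap_apply_def, Fin.mk.injEq]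
  split_ifs <;> first | rfl | omega

/-- The defect of `q`-exchangeability of the output cancels between the two inputs `g` and
`swapAt hr g`. -/
lemma defect_add_defect_swapAt {q s u : ℂ} {J r : ℕ} (hr : r + 1 < J) (i : ℕ)
    {P : (Fin J → Fin 2) → ℂ} (hP : IsQExch q P) {h : Fin J → Fin 2}
    (h1 : h ⟨r, Nat.lt_of_succ_lt hr⟩ = 1) (h0 : h ⟨r + 1, hr⟩ = 0) (g : Fin J → Fin 2) :
    P g * (colT q s u J i g (swapAt hr h) - q * colT q s u J i g h) +
      P (swapAt hr g) * (colT q s u J i (swapAt hr g) (swapAt hr h) -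
        q * colT q s u J i (swapAt hr g) h) = 0 := by
  have hrJ : r < J := Nat.lt_of_succ_lt hr
  have b1 : fext h r = 1 := by simp [fext, hrJ, h1]
  have b0 : fext h (r + 1) = 0 := by simp [fext, hr, h0]
  have ga : fext g r = g ⟨r, hrJ⟩ := by simp [fext, hrJ]
  have gb : fext g (r + 1) = g ⟨r + 1, hr⟩ := by simp [fext, hr]
  simp only [colT_eq_colRest_mul q s u hr, fext_swapAt, colRest_comp_swap_left,
    colRest_comp_swap_right, lseq_comp_swap i r _ _ (show r ≠ r + 1 by omega),
    lseq_comp_swap_right i r _ _ (show r ≠ r + 1 by omega), Function.comp,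
    Equiv.swap_apply_left, Equiv.swap_apply_right, b1, b0]
  by_cases hC : colRest q s u J i r (fext g) (fext h) = 0
  · simp [hC]
  obtain ⟨hl, hm⟩ := lseq_nonneg_of_colRest_ne_zero hr hC
  simp only [lseq, b1, b0] at hm
  generalize colRest q s u J i r (fext g) (fext h) = C
  generalize lseq i (fext g) (fext h) r = l at hl hm ⊢
  have hfin : ∀ x : Fin 2, x = 0 ∨ x = 1 := by decide
  rcases hfin (g ⟨r, hrJ⟩) with hx | hx <;> rcases hfin (g ⟨r + 1, hr⟩) with hy | hy <;>
    simp only [hx, hy, Fin.val_zero, Fin.val_one] at ga gb <;> rw [ga, gb] at hm ⊢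
  · rw [pairWeight_zero_zero q _ s (by push_cast at hm; omega)]
    ring
  · have hPg : P g = q * P (swapAt hr g) := by
      have := hP (swapAt hr g) r hr (by simp [swapAt, hy]) (by simp [swapAt, hx])
      rwa [show (fun i => swapAt hr g _) = g from swapAt_swapAt hr g] at this
    rw [hPg]
    linear_combination P (swapAt hr g) * C * pairWeight_mixed q (q ^ r * u) s hl
  · have hPg : P (swapAt hr g) = q * P g := hP g r hr hx hy
    rw [hPg]
    linear_combination P g * C * pairWeight_mixed q (q ^ r * u) s hl
  · rw [pairWeight_one_one q _ s hl]
    ring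

/-- **Preservation of `q`-exchangeability by a column of stochastic vertices** (the key
step of fusion): stacking vertically `J` vertices with spectral parameters
`u, qu, …, q^{J−1}u` maps `q`-exchangeable distributions of the incoming horizontal arrows
to `q`-exchangeable distributions of the outgoing horizontal arrows. -/
theorem statement9 (q s u : ℂ) (J : ℕ) (hJ : 1 ≤ J) (i₁ : ℕ)
    (hsu : ∀ r ∈ Finset.range J, s * (q ^ r * u) ≠ 1)
    (P₁ : (Fin J → Fin 2) → ℂ) (hP₁ : IsQExch q P₁) :
    IsQExch q (fun h₂ => ∑ h₁ : Fin J → Fin 2, P₁ h₁ * colT q s u J i₁ h₁ h₂) := by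
  intro h r hr h1 h0
  change ∑ g, P₁ g * colT q s u J i₁ g (swapAt hr h) = q * ∑ g, P₁ g * colT q s u J i₁ g h
  let F : (Fin J → Fin 2) → ℂ := fun g =>
    P₁ g * (colT q s u J i₁ g (swapAt hr h) - q * colT q s u J i₁ g h)
  have hσ : ∑ g, F (swapAt hr g) = ∑ g, F g :=
    Equiv.sum_comp (Function.Involutive.toPerm (swapAt hr) (swapAt_swapAt hr)) F
  have hsum : ∑ g, F g + ∑ g, F (swapAt hr g) = 0 := by
    rw [← Finset.sum_add_distrib]
    exact Finset.sum_eq_zero fun g _ => defect_add_defect_swapAt hr i₁ hP₁ h1 h0 g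
  have hF : ∑ g, F g = 0 := by
    rw [hσ] at hsum
    exact self_eq_neg.1 (eq_neg_of_add_eq_zero_left hsum)
  rw [← sub_eq_zero, Finset.mul_sum, ← Finset.sum_sub_distrib, ← hF]
  exact Finset.sum_congr rfl fun g _ => by simp only [F]; ring

end
end

section
/- Product formula for the fused stochastic weights at u = s (q-Hahn degeneration). Let J ∈ ℤ_{≥1} and let q, s ∈ ℂ satisfy: q ≠ 0, q is not a root of unity, s ≠ 0, and s² q^i ≠ 1 for all i ≥ 0. Then for all i₁, i₂ ∈ ℤ_{≥0} and j₁, j₂ ∈ {0, …, J}, the q-hypergeometric expression for the fused weight simplifies at u = s to a product: L^{(J)}_{s,s}(i₁, j₁; i₂, j₂) = 1_{i₁+j₁=i₂+j₂} · 1_{j₂≤i₁} · (s² q^J)^{j₂} · (q^{−J}; q)_{j₂} (s² q^J; q)_{i₁−j₂}/(s²; q)_{i₁} · (q; q)_{i₁}/((q; q)_{j₂} (q; q)_{i₁−j₂}). -/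
noncomputable section

open Finset

/-- The `q`-Pochhammer symbol `(a; q)_m` for `m ∈ ℕ`. -/
def qp (a q : ℂ) (m : ℕ) : ℂ := ∏ i ∈ Finset.range m, (1 - a * q ^ i)

/-- The `q`-Pochhammer symbol `(a; q)_m` for `m ∈ ℤ`:
`(a;q)_m = ∏_{i=0}^{m−1}(1 − a qⁱ)` for `m ≥ 0` and
`(a;q)_m = ∏_{k=0}^{−m−1}(1 − a q^{m+k})^{−1}` for `m < 0`. -/
def qpZ (a q : ℂ) (m : ℤ) : ℂ :=
  if 0 ≤ m then ∏ i ∈ Finset.range m.toNat, (1 - a * q ^ i)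
  else (∏ k ∈ Finset.range (-m).toNat, (1 - a * q ^ (m + (k : ℤ))))⁻¹

/-- The regularized terminating `q`-hypergeometric sum
`₄φ̄₃(q^{−n}; a₁,a₂,a₃; b₁,b₂,b₃ | q, z)
  = Σ_{k=0}^{n} z^k (q^{−n};q)_k/(q;q)_k ∏_{i=1}^{3} (a_i;q)_k (b_i q^k;q)_{n−k}`. -/
def qHyp4 (q z : ℂ) (n : ℕ) (a₁ a₂ a₃ b₁ b₂ b₃ : ℂ) : ℂ :=
  ∑ k ∈ Finset.range (n + 1),
    z ^ k * qp (q ^ (-(n : ℤ))) q k / qp q q k *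
      (qp a₁ q k * qp (b₁ * q ^ k) q (n - k)) *
      (qp a₂ q k * qp (b₂ * q ^ k) q (n - k)) *
      (qp a₃ q k * qp (b₃ * q ^ k) q (n - k))

/-- The fused stochastic vertex weights `L^{(J)}_{u,s}(i₁, j₁; i₂, j₂)`. -/
def LJ (q u s : ℂ) (J i₁ j₁ i₂ j₂ : ℕ) : ℂ :=
  if i₁ + j₁ = i₂ + j₂ then
    (-1 : ℂ) ^ i₁ * q ^ (i₁ * (i₁ + 2 * j₁ - 1) / 2) * u ^ i₁ *
        s ^ ((j₁ : ℤ) + (j₂ : ℤ) - (i₂ : ℤ)) * qpZ (u * s⁻¹) q ((j₂ : ℤ) - (i₁ : ℤ)) /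
        (qp q q i₂ * qp (s * u) q (i₂ + j₂) * qpZ (q ^ (J + 1 - j₁)) q ((j₁ : ℤ) - (j₂ : ℤ))) *
      qHyp4 q q i₂ (q ^ (-(i₁ : ℤ))) (s * u * q ^ J) (q * s * u⁻¹)
        (s ^ 2) (q ^ (1 + (j₂ : ℤ) - (i₁ : ℤ))) (q ^ ((J : ℤ) + 1 - (i₂ : ℤ) - (j₂ : ℤ)))
  else 0

/-! ### Elementary facts on `q`-Pochhammer symbols -/

lemma choose_two_add (m r : ℕ) : (m + r).choose 2 = m.choose 2 + r.choose 2 + m * r := by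
  induction r with
  | zero => simp
  | succ r ih =>
    rw [← add_assoc, Nat.choose_succ_succ' (m + r) 1, Nat.choose_succ_succ' r 1, ih]
    simp only [Nat.choose_one_right]
    ring

lemma two_mul_choose_two_add (m : ℕ) : 2 * m.choose 2 + m = m * m := by
  induction m with
  | zero => simp
  | succ m ih =>
    rw [Nat.choose_succ_succ' m 1, Nat.choose_one_right]
    linarith


lemma qp_zero (a q : ℂ) : qp a q 0 = 1 := by simp [qp]

lemma qp_succ (a q : ℂ) (m : ℕ) : qp a q (m + 1) = qp a q m * (1 - a * q ^ m) := by
  simp [qp, Finset.prod_range_succ]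

lemma qp_add (a q : ℂ) (m r : ℕ) : qp a q (m + r) = qp a q m * qp (a * q ^ m) q r := by
  simp [qp, Finset.prod_range_add, pow_add, mul_assoc]

lemma qp_succ_left (a q : ℂ) (m : ℕ) : qp a q (m + 1) = (1 - a) * qp (a * q) q m := by
  rw [add_comm, qp_add]
  simp [qp]

lemma qp_ne_zero {a q : ℂ} (h : ∀ i : ℕ, a * q ^ i ≠ 1) (m : ℕ) : qp a q m ≠ 0 :=
  Finset.prod_ne_zero_iff.2 fun i _ => sub_ne_zero.2 (h i).symm

lemma qp_eq_zero {a q : ℂ} {i m : ℕ} (h : a * q ^ i = 1) (him : i < m) : qp a q m = 0 :=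
  Finset.prod_eq_zero (Finset.mem_range.2 him) (by rw [h, sub_self])

lemma qp_self_ne_zero {q : ℂ} (hq : ∀ m : ℕ, 1 ≤ m → q ^ m ≠ 1) (m : ℕ) : qp q q m ≠ 0 :=
  qp_ne_zero (fun i => by rw [← pow_succ']; exact hq _ (by omega)) m

/-- Reversal of the factors of a `q`-Pochhammer symbol. -/
lemma qp_reverse {q y : ℂ} (hq0 : q ≠ 0) (hy : y ≠ 0) (r : ℕ) :
    qp (q * (q ^ r)⁻¹ * y⁻¹) q r = (-1) ^ r * (y ^ r)⁻¹ * (q ^ r.choose 2)⁻¹ * qp y q r := by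
  induction r with
  | zero => simp [qp_zero]
  | succ r ih =>
    have h : q * (q ^ (r + 1))⁻¹ * y⁻¹ * q = q * (q ^ r)⁻¹ * y⁻¹ := by
      rw [pow_succ]; field_simp
    rw [qp_succ_left, h, ih, qp_succ, Nat.choose_succ_succ' r 1, Nat.choose_one_right, pow_add q r]
    field_simp
    ring

lemma qp_inv_pow {q : ℂ} (hq0 : q ≠ 0) (m r : ℕ) :
    qp (q ^ (m + r))⁻¹ q m * qp q q r =
      (-1) ^ m * q ^ m.choose 2 * (q ^ ((m + r) * m))⁻¹ * qp q q (m + r) := by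
  induction m generalizing r with
  | zero => simp [qp_zero]
  | succ m ih =>
    have e : m + 1 + r = m + (r + 1) := by ring
    have h := ih (r + 1)
    rw [qp_succ] at h
    rw [qp_succ, e, Nat.choose_succ_succ' m 1, Nat.choose_one_right, pow_add q m (m.choose _)]
    have h2 : 1 - (q ^ (m + (r + 1)))⁻¹ * q ^ m = - (q ^ (r + 1))⁻¹ * (1 - q * q ^ r) := by
      field_simp
      ring
    rw [h2]
    have h3 : (q ^ ((m + (r + 1)) * (m + 1)))⁻¹ =
        (q ^ ((m + (r + 1)) * m))⁻¹ * (q ^ m)⁻¹ * (q ^ (r + 1))⁻¹ := by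
      rw [← mul_inv, ← mul_inv]; congr 1; ring
    rw [h3]
    calc _ = - (q ^ (r + 1))⁻¹ * (qp (q ^ (m + (r + 1)))⁻¹ q m * (qp q q r * (1 - q * q ^ r))) := by
            ring
      _ = _ := by
            rw [h]
            field_simp
            ring

/-! ### The balanced summation -/

/-- The summand of the polynomial form of the `q`-Saalschütz sum. -/
def saalTerm (q a b y : ℂ) (l r : ℕ) : ℂ :=
  qp q q (l + r) / (qp q q l * qp q q r) * y ^ l * qp a q l * qp b q l *
    qp (a * b * y * q ^ l) q r * qp y q r

lemma saalTerm_telescope {q : ℂ} (hq : ∀ m : ℕ, 1 ≤ m → q ^ m ≠ 1) (a b y : ℂ) (m r : ℕ) :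
    ∑ l ∈ range (m + 1), saalTerm q a b y l (m + r + 1 - l) =
      (1 - a * y * q ^ (m + r)) * (1 - b * y * q ^ (m + r)) *
        ∑ l ∈ range (m + 1), saalTerm q a b y l (m + r - l) -
      q ^ r * (qp q q (m + r) / (qp q q m * qp q q r)) * y ^ (m + 1) * qp a q (m + 1) *
        qp b q (m + 1) * qp (a * b * y * q ^ m) q r * qp y q r := by
  have hne := qp_self_ne_zero hq
  induction m generalizing r with
  | zero =>
    simp [saalTerm, qp_zero, qp_succ]
    rw [div_self (hne r), div_self (by rw [← qp_succ]; exact hne _)]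
    ring
  | succ m ih =>
    have e : m + 1 + r = m + (r + 1) := by ring
    have e1 : m + (r + 1) + 1 - (m + 1) = r + 1 := by omega
    have e2 : m + (r + 1) - (m + 1) = r := by omega
    rw [Finset.sum_range_succ, Finset.sum_range_succ _ (m + 1), e, ih (r + 1), mul_add, e1, e2]
    have h1 := hne m
    have h2 := hne r
    have f1 : 1 - q * q ^ m ≠ 0 := by
      rw [← pow_succ']; exact sub_ne_zero.2 (hq _ (by omega)).symm
    have f2 : 1 - q * q ^ r ≠ 0 := by
      rw [← pow_succ']; exact sub_ne_zero.2 (hq _ (by omega)).symm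
    have k1 : qp (a * b * y * q ^ m) q (r + 1) =
        (1 - a * b * y * q ^ m) * qp (a * b * y * q ^ (m + 1)) q r := by
      rw [qp_succ_left, pow_succ, mul_assoc (a * b * y)]
    simp only [saalTerm]
    rw [k1, qp_succ (a * b * y * q ^ (m + 1)), qp_succ y, qp_succ q q m, qp_succ q q r,
      qp_succ a q (m + 1), qp_succ b q (m + 1), show m + 1 + (r + 1) = m + (r + 1) + 1 by ring,
      show m + 1 + r = m + (r + 1) by ring, qp_succ q q (m + (r + 1))]
    field_simp
    ring

/-- The polynomial form of the `q`-Saalschütz summation. -/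
lemma sum_saalTerm {q : ℂ} (hq : ∀ m : ℕ, 1 ≤ m → q ^ m ≠ 1) (a b y : ℂ) (N : ℕ) :
    ∑ l ∈ range (N + 1), saalTerm q a b y l (N - l) = qp (a * y) q N * qp (b * y) q N := by
  induction N with
  | zero => simp [saalTerm, qp_zero]
  | succ N ih =>
    have h := saalTerm_telescope hq a b y N 0
    have hN := qp_self_ne_zero hq N
    have hN1 := qp_self_ne_zero hq (N + 1)
    rw [Finset.sum_range_succ, Nat.sub_self]
    simp only [add_zero, qp_zero] at h
    rw [h, ih, qp_succ (a * y), qp_succ (b * y)]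
    simp only [saalTerm, add_zero, qp_zero]
    field_simp
    ring

/-- The regularized `q`-Saalschütz summation. -/
lemma qSaalschutz {q y : ℂ} (hq0 : q ≠ 0) (hq : ∀ m : ℕ, 1 ≤ m → q ^ m ≠ 1) (hy : y ≠ 0)
    (a b : ℂ) (N : ℕ) :
    ∑ l ∈ range (N + 1), q ^ l * qp (q ^ N)⁻¹ q l / qp q q l * qp a q l * qp b q l *
        qp (a * b * y * q ^ l) q (N - l) * qp (q * (q ^ N)⁻¹ * y⁻¹ * q ^ l) q (N - l) =
      (-1) ^ N * (y ^ N)⁻¹ * (q ^ N.choose 2)⁻¹ * (qp (a * y) q N * qp (b * y) q N) := by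
  rw [← sum_saalTerm hq, Finset.mul_sum]
  refine Finset.sum_congr rfl fun l hl => ?_
  obtain ⟨r, rfl⟩ := Nat.exists_eq_add_of_le (Nat.lt_succ_iff.1 (Finset.mem_range.1 hl))
  have e : q * (q ^ (l + r))⁻¹ * y⁻¹ * q ^ l = q * (q ^ r)⁻¹ * y⁻¹ := by
    rw [pow_add]; field_simp
  have hl := qp_self_ne_zero hq l
  have hr := qp_self_ne_zero hq r
  rw [Nat.add_sub_cancel_left, e, qp_reverse hq0 hy,
    eq_div_of_mul_eq hr (qp_inv_pow hq0 l r)]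
  have hc : q ^ l * q ^ l.choose 2 * q ^ (l + r).choose 2 =
      q ^ ((l + r) * l) * q ^ r.choose 2 := by
    rw [← pow_add, ← pow_add, ← pow_add]
    congr 1
    have h₁ := choose_two_add l r
    have h₂ := two_mul_choose_two_add l
    nlinarith
  simp only [saalTerm]
  generalize qp (a * b * y * q ^ l) q r = Z
  field_simp
  rw [show y ^ (l + r) = y ^ l * y ^ r by ring]
  rw [show (-1 : ℂ) ^ (l + r) = (-1) ^ l * (-1) ^ r by ring]
  linear_combination (-1) ^ l * (-1) ^ r * y ^ l * y ^ r * qp a q l * qp b q l *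
    Z * qp y q r * qp q q (l + r) * hc

/-! ### The weights at `u = s` -/

lemma qpZ_neg {q : ℂ} (hq0 : q ≠ 0) (a : ℂ) (p : ℕ) :
    qpZ a q (-(p : ℤ)) = (qp (a * (q ^ p)⁻¹) q p)⁻¹ := by
  rcases Nat.eq_zero_or_pos p with rfl | hp
  · simp [qpZ, qp]
  · rw [qpZ, if_neg (by omega), neg_neg, Int.toNat_natCast, qp]
    congr 1
    refine Finset.prod_congr rfl fun k _ => ?_
    rw [zpow_add₀ hq0, zpow_neg, zpow_natCast, zpow_natCast, mul_assoc]

lemma qpZ_mul_qp {q : ℂ} (hq0 : q ≠ 0) (hq : ∀ m : ℕ, 1 ≤ m → q ^ m ≠ 1) {J j₁ j₂ : ℕ}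
    (hj₁ : j₁ ≤ J) (hj₂ : j₂ ≤ J) :
    qpZ (q ^ (J + 1 - j₁)) q ((j₁ : ℤ) - (j₂ : ℤ)) * qp q q (J - j₁) = qp q q (J - j₂) := by
  rcases le_total j₂ j₁ with h | h
  · obtain ⟨d, rfl⟩ := Nat.exists_eq_add_of_le h
    obtain ⟨r, rfl⟩ := Nat.exists_eq_add_of_le hj₁
    have e : ((j₂ + d : ℕ) : ℤ) - (j₂ : ℤ) = (d : ℕ) := by push_cast; ring
    have e1 : j₂ + d + r + 1 - (j₂ + d) = r + 1 := by omega
    have e2 : j₂ + d + r - (j₂ + d) = r := by omega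
    have e3 : j₂ + d + r - j₂ = r + d := by omega
    rw [e, e1, e2, e3, qp_add, ← pow_succ', mul_comm, qpZ, if_pos (by omega), Int.toNat_natCast, qp]
    rfl
  · obtain ⟨d, rfl⟩ := Nat.exists_eq_add_of_le h
    obtain ⟨r, rfl⟩ := Nat.exists_eq_add_of_le hj₂
    have e : (j₁ : ℤ) - ((j₁ + d : ℕ) : ℤ) = -(d : ℕ) := by push_cast; ring
    have e1 : j₁ + d + r + 1 - j₁ = r + 1 + d := by omega
    have e2 : j₁ + d + r - (j₁ + d) = r := by omega
    have e3 : j₁ + d + r - j₁ = r + d := by omega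
    have e4 : q ^ (r + 1 + d) * (q ^ d)⁻¹ = q * q ^ r := by
      rw [pow_add, pow_succ]; field_simp
    have h1 : qp (q * q ^ r) q d ≠ 0 := by
      refine qp_ne_zero (fun i => ?_) d
      rw [← pow_succ', ← pow_add]
      exact hq _ (by omega)
    rw [e, e1, e2, e3, qpZ_neg hq0, e4, qp_add]
    field_simp

lemma qHyp4_eq {q : ℂ} (hq0 : q ≠ 0) (hq : ∀ m : ℕ, 1 ≤ m → q ^ m ≠ 1) (t : ℂ) (J p j₁ j₂ : ℕ) :
    qHyp4 q q (p + j₁) (q ^ (p + j₂))⁻¹ (t * q ^ J) q t (q * (q ^ p)⁻¹)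
        (q * (q ^ j₁)⁻¹ * (q ^ j₂ * (q ^ J)⁻¹)⁻¹ * (q ^ p)⁻¹) =
      q ^ p * qp (q ^ (p + j₁))⁻¹ q p * qp (q ^ (p + j₂))⁻¹ q p * qp (t * q ^ J) q p * qp q q j₁ *
        ((-1) ^ j₁ * ((q ^ j₂ * (q ^ J)⁻¹) ^ j₁)⁻¹ * (q ^ j₁.choose 2)⁻¹ *
          (qp (q ^ J)⁻¹ q j₁ * qp (t * q ^ (p + j₂)) q j₁)) := by
  have hne := qp_self_ne_zero hq
  have hy : q ^ j₂ * (q ^ J)⁻¹ ≠ 0 := by positivity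
  have hS := qSaalschutz hq0 hq hy (q ^ j₂)⁻¹ (t * q ^ J * q ^ p) j₁
  have ha : (q ^ j₂)⁻¹ * (q ^ j₂ * (q ^ J)⁻¹) = (q ^ J)⁻¹ := by field_simp
  have hb : t * q ^ J * q ^ p * (q ^ j₂ * (q ^ J)⁻¹) = t * q ^ (p + j₂) := by
    rw [pow_add]; field_simp
  have hc : (q ^ j₂)⁻¹ * (t * q ^ J * q ^ p) * (q ^ j₂ * (q ^ J)⁻¹) = t * q ^ p := by field_simp
  rw [ha, hb, hc] at hS
  rw [← hS, qHyp4, add_assoc, Finset.sum_range_add, Finset.sum_eq_zero, zero_add, Finset.mul_sum]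
  · refine Finset.sum_congr rfl fun l hl => ?_
    obtain ⟨r, rfl⟩ := Nat.exists_eq_add_of_le (Nat.lt_succ_iff.1 (Finset.mem_range.1 hl))
    have e1 : p + (l + r) - (p + l) = r := by omega
    have e2 : (q ^ (p + (l + r)))⁻¹ * q ^ p = (q ^ (l + r))⁻¹ := by
      rw [pow_add]; field_simp
    have e3 : (q ^ (p + j₂))⁻¹ * q ^ p = (q ^ j₂)⁻¹ := by
      rw [pow_add]; field_simp
    have e4 : ∀ x : ℂ, x * (q ^ p)⁻¹ * q ^ (p + l) = x * q ^ l := fun x => by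
      rw [pow_add]; field_simp
    have e5 : t * q ^ (p + l) = t * q ^ p * q ^ l := by ring
    have h1 := hne (p + l)
    have h2 := hne l
    rw [Nat.add_sub_cancel_left, e1, e4, e4, e5, zpow_neg, zpow_natCast,
      qp_add (q ^ (p + (l + r)))⁻¹, qp_add (q ^ (p + j₂))⁻¹, qp_add (t * q ^ J), e2, e3, qp_add q q l r,
      pow_add q p l]
    generalize qp (q * (q ^ (l + r))⁻¹ * (q ^ j₂ * (q ^ J)⁻¹)⁻¹ * q ^ l) q r = Z
    generalize (q ^ (p + (l + r)))⁻¹ = X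
    generalize (q ^ (p + j₂))⁻¹ = Y
    generalize (q ^ (l + r))⁻¹ = W
    generalize qp (t * q ^ J * q ^ p) q l = V
    generalize qp (t * q ^ p * q ^ l) q r = U
    generalize qp (q * q ^ l) q r = T
    field_simp
  · intro k hk
    have hk := Finset.mem_range.1 hk
    obtain ⟨d, rfl⟩ := Nat.exists_eq_add_of_lt hk
    have h0 : qp (q * (q ^ (k + d + 1))⁻¹ * q ^ k) q (k + d + 1 + j₁ - k) = 0 := by
      refine qp_eq_zero (i := d) ?_ (by omega)
      rw [pow_succ, pow_add]; field_simp
    rw [h0]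
    ring

/-- **Product formula for the fused stochastic weights at `u = s`** (`q`-Hahn degeneration):
the `q`-hypergeometric expression for `L^{(J)}_{s,s}` simplifies to a product. -/
theorem statement10 (q s : ℂ) (J : ℕ) (hJ : 1 ≤ J) (hq0 : q ≠ 0)
    (hq : ∀ m : ℕ, 1 ≤ m → q ^ m ≠ 1) (hs : s ≠ 0) (hsq : ∀ i : ℕ, s ^ 2 * q ^ i ≠ 1)
    (i₁ j₁ i₂ j₂ : ℕ) (hj₁ : j₁ ≤ J) (hj₂ : j₂ ≤ J) :
    LJ q s s J i₁ j₁ i₂ j₂ =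
      if i₁ + j₁ = i₂ + j₂ ∧ j₂ ≤ i₁ then
        (s ^ 2 * q ^ J) ^ j₂ *
          (qp (q ^ (-(J : ℤ))) q j₂ * qp (s ^ 2 * q ^ J) q (i₁ - j₂) / qp (s ^ 2) q i₁) *
          (qp q q i₁ / (qp q q j₂ * qp q q (i₁ - j₂)))
      else 0 := by
  have hne := qp_self_ne_zero hq
  rw [LJ]
  by_cases hij : i₁ + j₁ = i₂ + j₂
  swap
  · rw [if_neg hij, if_neg fun h => hij h.1]
  rw [if_pos hij]
  rcases lt_or_ge i₁ j₂ with h | h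
  · have h0 : qpZ (s * s⁻¹) q ((j₂ : ℤ) - (i₁ : ℤ)) = 0 := by
      rw [mul_inv_cancel₀ hs, qpZ, if_pos (by omega)]
      exact qp_eq_zero (i := 0) (by simp) (by omega)
    rw [h0, if_neg fun h' => absurd h'.2 (by omega)]
    simp
  rw [if_pos ⟨hij, h⟩]
  obtain ⟨p, rfl⟩ := Nat.exists_eq_add_of_le' h
  obtain rfl : i₂ = p + j₁ := by omega
  have z1 : (j₂ : ℤ) - ((p + j₂ : ℕ) : ℤ) = -(p : ℤ) := by push_cast; ring
  have z2 : (j₁ : ℤ) + (j₂ : ℤ) - ((p + j₁ : ℕ) : ℤ) = (j₂ : ℤ) - p := by push_cast; ring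
  have z3 : q ^ (1 + (j₂ : ℤ) - ((p + j₂ : ℕ) : ℤ)) = q * (q ^ p)⁻¹ := by
    rw [show 1 + (j₂ : ℤ) - ((p + j₂ : ℕ) : ℤ) = 1 - p by push_cast; ring, zpow_sub₀ hq0,
      zpow_one, zpow_natCast, div_eq_mul_inv]
  have z4 : q ^ ((J : ℤ) + 1 - ((p + j₁ : ℕ) : ℤ) - (j₂ : ℤ)) =
      q * (q ^ j₁)⁻¹ * (q ^ j₂ * (q ^ J)⁻¹)⁻¹ * (q ^ p)⁻¹ := by
    rw [Nat.cast_add, zpow_sub₀ hq0, zpow_sub₀ hq0, zpow_add₀ hq0, zpow_add₀ hq0, zpow_one,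
      zpow_natCast, zpow_natCast, zpow_natCast, zpow_natCast]
    field_simp
  have z5 : s ^ ((j₂ : ℤ) - p) = s ^ j₂ * (s ^ p)⁻¹ := by
    rw [zpow_sub₀ hs, zpow_natCast, zpow_natCast, div_eq_mul_inv]
  have e1 : (p + j₂) * (p + j₂ + 2 * j₁ - 1) / 2 = (p + j₂).choose 2 + (p + j₂) * j₁ := by
    have h₁ := two_mul_choose_two_add (p + j₂)
    have h₂ : (p + j₂) * (p + j₂ + 2 * j₁ - 1) + (p + j₂) = (p + j₂) * (p + j₂ + 2 * j₁) := by
      rcases Nat.eq_zero_or_pos (p + j₂) with h0 | h0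
      · simp [h0]
      · rw [← Nat.mul_add_one, Nat.sub_add_cancel (by omega)]
    have h₃ : (p + j₂) * (p + j₂ + 2 * j₁) = (p + j₂) * (p + j₂) + 2 * ((p + j₂) * j₁) := by ring
    omega
  rw [z1, z2, z3, z4, z5, e1, zpow_neg, zpow_neg, zpow_natCast, zpow_natCast, mul_inv_cancel₀ hs,
    qpZ_neg hq0, one_mul, mul_inv_cancel_right₀ hs, ← pow_two, qHyp4_eq hq0 hq,
    Nat.add_sub_cancel, show p + j₁ + j₂ = p + j₂ + j₁ by ring, qp_add (s ^ 2) q (p + j₂) j₁,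
    eq_div_of_mul_eq (hne _) (qpZ_mul_qp hq0 hq hj₁ hj₂),
    eq_div_of_mul_eq (hne _) (qp_inv_pow hq0 p j₁),
    eq_div_of_mul_eq (hne _) (qp_inv_pow hq0 p j₂)]
  have k1 := qp_inv_pow hq0 p 0
  have k2 := qp_inv_pow hq0 j₁ (J - j₁)
  have k3 := qp_inv_pow hq0 j₂ (J - j₂)
  rw [qp_zero, mul_one, add_zero] at k1
  rw [Nat.add_sub_cancel' hj₁] at k2
  rw [Nat.add_sub_cancel' hj₂] at k3
  rw [k1, eq_div_of_mul_eq (hne _) k2, eq_div_of_mul_eq (hne _) k3]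
  have n1 : qp (s ^ 2) q (p + j₂) ≠ 0 := qp_ne_zero hsq _
  have n2 : qp (s ^ 2 * q ^ (p + j₂)) q j₁ ≠ 0 :=
    qp_ne_zero (fun i => by rw [mul_assoc, ← pow_add]; exact hsq _) _
  have n3 := hne p
  have n4 := hne j₁
  have n5 := hne j₂
  have n6 := hne (p + j₁)
  have n7 := hne (p + j₂)
  have n8 := hne (J - j₁)
  have n9 := hne (J - j₂)
  have n10 := hne J
  generalize qp (s ^ 2 * q ^ (p + j₂)) q j₁ = A at *
  generalize qp (s ^ 2 * q ^ J) q p = B at *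
  generalize qp (s ^ 2) q (p + j₂) = C at *
  have hc : (p + j₂).choose 2 = p.choose 2 + j₂.choose 2 + p * j₂ := choose_two_add p j₂
  have hp : q ^ p * (q ^ p.choose 2) ^ 2 = q ^ (p * p) := by
    rw [← pow_mul, ← pow_add, ← two_mul_choose_two_add p]; congr 1; ring
  have hsign : (-1 : ℂ) ^ p * (-1) ^ p = 1 := by rw [← mul_pow]; norm_num
  rw [hc]
  field_simp
  have hy : (q ^ j₂ / q ^ J) ^ j₁ * q ^ (J * j₁) = q ^ (j₂ * j₁) := by
    rw [pow_mul q J, ← mul_pow, div_mul_cancel₀ _ (pow_ne_zero _ hq0), pow_mul]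
  have hsign₁ : ((-1 : ℂ) ^ j₁) ^ 2 = 1 := by rw [← pow_mul, mul_comm, pow_mul]; norm_num
  calc _ = s ^ (p + 2 * j₂) * B * q ^ (J * j₂) * (-1) ^ j₂ * q ^ j₂.choose 2 *
        q ^ (p * j₂ + (p + j₂) * j₁ + p * p) * ((-1) ^ p * (-1) ^ p) * ((-1) ^ j₁) ^ 2 *
        (q ^ p * (q ^ p.choose 2) ^ 2) := by ring
    _ = s ^ (p + 2 * j₂) * B * q ^ (J * j₂) * (-1) ^ j₂ * q ^ j₂.choose 2 *
        q ^ ((p + j₁) * p + (p + j₂) * p) * q ^ (j₂ * j₁) := by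
      rw [hsign, hsign₁, hp]; ring
    _ = _ := by rw [← hy]; ring

end
end

section
/- Evaluation of the specialization G_ν(ϱ). Fix n ≥ 0 and ν ∈ Sign⁺_n with exactly k parts equal to 0, and assume q ≠ 0 and all ξ_ℓ, s_ℓ are nonzero. For ε ∈ ℂ ∖ {0} define g(ε) := [(s_0² q^k; q)_{n−k} · (ξ_0 q^{1+k−n}/(s_0 ε); q)_{n−k} · (s_0 ε/ξ_0; q)_{n−k} · (1; q)_k] / [(s_0 ξ_0/ε; q^{−1})_{n−k} · (s_0 ε/ξ_0; q)_n] · ∏_{j=1}^{n−k} [ 1/(1 − s_{ν_j} ξ_{ν_j}^{−1} q^{j−1} ε) · ∏_{ℓ=0}^{ν_j − 1} (ξ_ℓ^{−1} q^{j−1} ε − s_ℓ)/(1 − s_ℓ ξ_ℓ^{−1} q^{j−1} ε) ]; this g(ε) is the result of substituting q^J := ξ_0/(s_0 ε) into the explicit product formula (rational in q^J) for the principal specialization G_ν(ε, qε, …, q^{J−1}ε | ξ̄, S). Then, as ε → 0 along nonzero values, g(ε) converges: if ν_n ≥ 1 (so k = 0) the limit equals (−S)^ν · (s_0²; q)_n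 · s_0^{−2n}, where (−S)^ν := ∏_{i=1}^{n} ∏_{j=0}^{ν_i−1}(−s_j); and if ν_n = 0 (so k ≥ 1) then g ≡ 0, so the limit is 0. In particular the limit does not depend on the inhomogeneity parameters ξ. -/
noncomputable section

open Finset

/-- The `q⁻¹`-Pochhammer symbol `(a; q⁻¹)_m = ∏_{i=0}^{m−1} (1 − a q^{−i})`. -/
def qpD (a q : ℂ) (m : ℕ) : ℂ := ∏ i ∈ Finset.range m, (1 - a * q ^ (-(i : ℤ)))

/-- `(−S)^ν := ∏_{i=1}^{n} ∏_{j=0}^{ν_i−1} (−s_j)`. -/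
def mS (s : ℕ → ℂ) {n : ℕ} (ν : Fin n → ℕ) : ℂ :=
  ∏ i : Fin n, ∏ j ∈ Finset.range (ν i), -s j

/-- The result `g(ε)` of substituting `q^J := ξ₀/(s₀ ε)` into the explicit product formula
for the principal specialization `G_ν(ε, qε, …, q^{J−1}ε | ξ̄, S)`, where `ν ∈ Sign⁺_n`
has exactly `k` zero parts. -/
def gfun (q : ℂ) (ξ s : ℕ → ℂ) {n : ℕ} (ν : Fin n → ℕ) (k : ℕ) (ε : ℂ) : ℂ :=
  qp (s 0 ^ 2 * q ^ k) q (n - k) *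
      qp (ξ 0 * q ^ (1 + (k : ℤ) - (n : ℤ)) / (s 0 * ε)) q (n - k) *
      qp (s 0 * ε / ξ 0) q (n - k) * qp 1 q k /
      (qpD (s 0 * ξ 0 / ε) q (n - k) * qp (s 0 * ε / ξ 0) q n) *
    ∏ j ∈ Finset.univ.filter fun j : Fin n => (j : ℕ) < n - k,
      (1 / (1 - s (ν j) * (ξ (ν j))⁻¹ * (q ^ (j : ℕ) * ε)) *
        ∏ ℓ ∈ Finset.range (ν j),
          ((ξ ℓ)⁻¹ * (q ^ (j : ℕ) * ε) - s ℓ) / (1 - s ℓ * (ξ ℓ)⁻¹ * (q ^ (j : ℕ) * ε)))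

/-- As `ε → 0`, the ratio `(1 - a/ε) / (1 - b/ε)` tends to `a / b`. -/
theorem tendsto_one_sub_div_ratio (a b : ℂ) (hb : b ≠ 0) :
    Filter.Tendsto (fun ε : ℂ => (1 - a / ε) / (1 - b / ε)) (nhdsWithin 0 {0}ᶜ)
      (nhds (a / b)) := by
  have h : Filter.Tendsto (fun ε : ℂ => (ε - a) / (ε - b)) (nhdsWithin 0 {0}ᶜ)
      (nhds ((0 - a) / (0 - b))) := by
    refine Filter.Tendsto.mono_left (ContinuousAt.tendsto ?_) nhdsWithin_le_nhds
    exact (continuousAt_id.sub continuousAt_const).div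
      (continuousAt_id.sub continuousAt_const) (by simpa using hb)
  rw [zero_sub, zero_sub, neg_div_neg_eq] at h
  refine h.congr' ?_
  filter_upwards [self_mem_nhdsWithin] with ε hε
  have hε : ε ≠ 0 := hε
  rw [one_sub_div hε, one_sub_div hε, div_div_div_cancel_right₀ hε]

/-- Reversing the order of the factors of a `q`-Pochhammer symbol. -/
theorem qp_mul_zpow_eq_qpD (c q : ℂ) (hq : q ≠ 0) (n : ℕ) :
    qp (c * q ^ (1 - (n : ℤ))) q n = qpD c q n := by
  unfold qp qpD
  rw [← Finset.prod_range_reflect]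
  refine Finset.prod_congr rfl fun i hi => ?_
  have hi := Finset.mem_range.mp hi
  rw [mul_assoc, ← zpow_natCast, ← zpow_add₀ hq]
  congr 3
  omega

/-- As `ε → 0`, the ratio `(a/ε; q⁻¹)_n / (b/ε; q⁻¹)_n` tends to `(a/b)^n`. -/
theorem tendsto_qpD_div_qpD (a b q : ℂ) (hq : q ≠ 0) (hb : b ≠ 0) (n : ℕ) :
    Filter.Tendsto (fun ε : ℂ => qpD (a / ε) q n / qpD (b / ε) q n) (nhdsWithin 0 {0}ᶜ)
      (nhds ((a / b) ^ n)) := by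
  have h : Filter.Tendsto (fun ε : ℂ => ∏ i ∈ Finset.range n,
      (1 - a * q ^ (-(i : ℤ)) / ε) / (1 - b * q ^ (-(i : ℤ)) / ε)) (nhdsWithin 0 {0}ᶜ)
      (nhds (∏ i ∈ Finset.range n, a * q ^ (-(i : ℤ)) / (b * q ^ (-(i : ℤ))))) :=
    tendsto_finsetProd _ fun i _ =>
      tendsto_one_sub_div_ratio _ _ (mul_ne_zero hb (zpow_ne_zero _ hq))
  have hlim : ∏ i ∈ Finset.range n, a * q ^ (-(i : ℤ)) / (b * q ^ (-(i : ℤ))) = (a / b) ^ n := by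
    rw [Finset.prod_congr rfl fun (i : ℕ) _ => mul_div_mul_right a b (zpow_ne_zero (-(i : ℤ)) hq)]
    simp [div_pow]
  rw [hlim] at h
  refine h.congr fun ε => ?_
  simp only [qpD, Finset.prod_div_distrib, div_mul_eq_mul_div]

/-- A `q`-Pochhammer symbol is continuous in its argument. -/
theorem continuous_qp (q : ℂ) (n : ℕ) : Continuous fun a => qp a q n := by
  unfold qp
  fun_prop

theorem qp_zero_left (q : ℂ) (n : ℕ) : qp 0 q n = 1 := by
  simp [qp]

/-- The symbol `(1; q)_k` vanishes for `k ≥ 1`. -/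
theorem qp_one_left (q : ℂ) {k : ℕ} (hk : 1 ≤ k) : qp 1 q k = 0 :=
  Finset.prod_eq_zero (Finset.mem_range.mpr hk) (by simp)

/-- The product over the parts of `ν` in `gfun` tends to `(−S)^ν`. -/
theorem tendsto_prod_parts (q : ℂ) (ξ s : ℕ → ℂ) {n : ℕ} (ν : Fin n → ℕ) :
    Filter.Tendsto (fun ε : ℂ => ∏ j : Fin n,
      (1 / (1 - s (ν j) * (ξ (ν j))⁻¹ * (q ^ (j : ℕ) * ε)) *
        ∏ ℓ ∈ Finset.range (ν j),
          ((ξ ℓ)⁻¹ * (q ^ (j : ℕ) * ε) - s ℓ) / (1 - s ℓ * (ξ ℓ)⁻¹ * (q ^ (j : ℕ) * ε))))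
      (nhds 0) (nhds (mS s ν)) := by
  refine tendsto_finsetProd _ fun j _ => ?_
  have hden : ∀ c : ℂ, Filter.Tendsto (fun ε : ℂ => 1 - c * (q ^ (j : ℕ) * ε)) (nhds 0)
      (nhds 1) := fun c => by
    have h : Continuous fun ε : ℂ => 1 - c * (q ^ (j : ℕ) * ε) := by fun_prop
    simpa using h.tendsto 0
  have hnum : ∀ c d : ℂ, Filter.Tendsto (fun ε : ℂ => c * (q ^ (j : ℕ) * ε) - d) (nhds 0)
      (nhds (-d)) := fun c d => by
    have h : Continuous fun ε : ℂ => c * (q ^ (j : ℕ) * ε) - d := by fun_prop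
    simpa using h.tendsto 0
  have h1 := (tendsto_const_nhds (x := (1 : ℂ))).div (hden (s (ν j) * (ξ (ν j))⁻¹)) one_ne_zero
  have h2 := tendsto_finsetProd (Finset.range (ν j)) fun ℓ _ =>
    (hnum (ξ ℓ)⁻¹ (s ℓ)).div (hden (s ℓ * (ξ ℓ)⁻¹)) one_ne_zero
  simpa using h1.mul h2

/-- **Evaluation of the specialization `G_ν(ϱ)`**: as `ε → 0` along nonzero values,
`g(ε)` converges to `(−S)^ν (s₀²; q)_n s₀^{−2n}` when `ν` has no zero parts (`k = 0`),
and to `0` otherwise; in the latter case `g` vanishes identically.  In particular the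
limit does not depend on the inhomogeneity parameters `ξ`. -/
theorem statement11 (q : ℂ) (ξ s : ℕ → ℂ) (hq : q ≠ 0) (hξ : ∀ x, ξ x ≠ 0)
    (hs : ∀ x, s x ≠ 0) (n k : ℕ) (ν : Fin n → ℕ) (hν : Antitone ν)
    (hk : (Finset.univ.filter fun i => ν i = 0).card = k) :
    Filter.Tendsto (gfun q ξ s ν k) (nhdsWithin (0 : ℂ) {(0 : ℂ)}ᶜ)
      (nhds (if k = 0 then mS s ν * qp (s 0 ^ 2) q n * s 0 ^ (-(2 * (n : ℤ))) else 0)) ∧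
    (1 ≤ k → ∀ ε : ℂ, ε ≠ 0 → gfun q ξ s ν k ε = 0) := by
  have hzero : 1 ≤ k → ∀ ε : ℂ, ε ≠ 0 → gfun q ξ s ν k ε = 0 := fun hk1 ε _ => by
    simp [gfun, qp_one_left q hk1]
  refine ⟨?_, hzero⟩
  rcases Nat.eq_zero_or_pos k with rfl | hk1
  · have hqp : Filter.Tendsto (fun ε : ℂ => qp (s 0 * ε / ξ 0) q n) (nhdsWithin 0 {0}ᶜ)
        (nhds 1) := by
      have h : Continuous fun ε : ℂ => qp (s 0 * ε / ξ 0) q n :=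
        (continuous_qp q n).comp (by fun_prop)
      have h0 := h.tendsto 0
      simp only [mul_zero, zero_div, qp_zero_left] at h0
      exact h0.mono_left nhdsWithin_le_nhds
    have hratio := tendsto_qpD_div_qpD (ξ 0 / s 0) (s 0 * ξ 0) q hq
      (mul_ne_zero (hs 0) (hξ 0)) n
    have hparts := (tendsto_prod_parts q ξ s ν).mono_left
      (nhdsWithin_le_nhds (s := {(0 : ℂ)}ᶜ))
    have h := (((hratio.const_mul (qp (s 0 ^ 2) q n)).mul
      (hqp.div hqp one_ne_zero)).mul hparts)
    have hpow : (ξ 0 / s 0 / (s 0 * ξ 0)) ^ n = s 0 ^ (-(2 * (n : ℤ))) := by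
      have hbase : ξ 0 / s 0 / (s 0 * ξ 0) = s 0 ^ (-2 : ℤ) := by
        have h1 := hs 0
        have h2 := hξ 0
        rw [zpow_neg, zpow_ofNat]
        field_simp
      rw [hbase, ← zpow_natCast, ← zpow_mul, neg_mul]
    have hlim : qp (s 0 ^ 2) q n * (ξ 0 / s 0 / (s 0 * ξ 0)) ^ n * (1 / 1) * mS s ν =
        mS s ν * qp (s 0 ^ 2) q n * s 0 ^ (-(2 * (n : ℤ))) := by
      rw [hpow]
      ring
    rw [if_pos rfl, ← hlim]
    refine h.congr fun ε => ?_
    have hrev : qp (ξ 0 * q ^ (1 + ((0 : ℕ) : ℤ) - (n : ℤ)) / (s 0 * ε)) q n =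
        qpD (ξ 0 / s 0 / ε) q n := by
      rw [← qp_mul_zpow_eq_qpD _ q hq, div_div, Nat.cast_zero, add_zero, div_mul_eq_mul_div]
    have hone : qp 1 q 0 = 1 := by simp [qp]
    have hfilter : (Finset.univ.filter fun j : Fin n => (j : ℕ) < n - 0) = Finset.univ := by
      simp
    unfold gfun
    rw [hfilter, Nat.sub_zero, hrev, hone, pow_zero, mul_one, mul_one]
    simp only [Pi.div_apply]
    ring
  · rw [if_neg hk1.ne']
    refine tendsto_const_nhds.congr' ?_
    filter_upwards [self_mem_nhdsWithin] with ε hε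
    exact (hzero hk1 ε hε).symm

end
end

section
/- Partial symmetrization identity. Let K be a field, q ∈ K, m ≥ 1, 0 ≤ ℓ ≤ m, let ζ_1, …, ζ_m ∈ K be pairwise distinct, and let f_1, …, f_ℓ : K → K be arbitrary functions. Then Σ_{σ ∈ S_m} ∏_{i=1}^{ℓ} f_i(ζ_{σ(i)}) · ∏_{1≤α<β≤m} (ζ_{σ(α)} − q ζ_{σ(β)})/(ζ_{σ(α)} − ζ_{σ(β)}) = [m−ℓ]_q! · Σ_{J = {j₁ < … < j_ℓ} ⊆ {1, …, m}} [ ∏_{j ∈ J, r ∉ J} (ζ_j − q ζ_r)/(ζ_j − ζ_r) · Σ_{σ' ∈ S_ℓ} ∏_{i=1}^{ℓ} f_i(ζ_{j_{σ'(i)}}) · ∏_{1≤α<β≤ℓ} (ζ_{j_{σ'(α)}} − q ζ_{j_{σ'(β)}})/(ζ_{j_{σ'(α)}} − ζ_{j_{σ'(β)}}) ], where [d]_q! := ∏_{t=1}^{d} (1 + q + … + q^{t−1}) is the q-factorial (equal to (q;q)_d/(1−q)^d when q ≠ 1). In particular, for ℓ = 0 this reduces to the symmetrization identity Σ_{σ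 ∈ S_m} ∏_{1≤α<β≤m} (ζ_{σ(α)} − q ζ_{σ(β)})/(ζ_{σ(α)} − ζ_{σ(β)}) = [m]_q!. -/
noncomputable section

open Finset
open scoped Classical

/-- The `q`-factorial `[d]_q! = ∏_{t=1}^{d} (1 + q + … + q^{t−1})`. -/
def qfact {K : Type*} [CommRing K] (q : K) (d : ℕ) : K :=
  ∏ t ∈ Finset.range d, ∑ i ∈ Finset.range (t + 1), q ^ i

/-- Partial fractions: for `a ∉ s`, the product `∏_{r ∈ s} (ζ_a − qζ_r)/(ζ_a − ζ_r)` in terms of its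
residues at the `ζ_x`, `x ∈ s`. -/
theorem prod_eq_pow_add_sum_residues {K X : Type*} [Field K] [DecidableEq X] (q : K) (ζ : X → K)
    (hζ : Function.Injective ζ) (s : Finset X) (y : X) (hy : y ∉ s) :
    ∏ r ∈ s, (ζ y - q * ζ r) / (ζ y - ζ r) = q ^ #s + (1 - q) * ζ y *
      ∑ x ∈ s, (∏ r ∈ s.erase x, (ζ x - q * ζ r) / (ζ x - ζ r)) / (ζ y - ζ x) := by
  induction s using Finset.induction_on generalizing y with
  | empty => simp
  | insert a s ha ih =>
    have hne : ∀ {x z : X}, x ≠ z → ζ x - ζ z ≠ 0 := fun h => sub_ne_zero.2 (hζ.ne h)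
    have hys : y ∉ s := fun h => hy (mem_insert_of_mem h)
    have hya : ζ y - ζ a ≠ 0 := hne fun h => hy (h ▸ mem_insert_self a s)
    have iha := ih a ha
    have ihy := ih y hys
    set c : X → K := fun x => ∏ r ∈ s.erase x, (ζ x - q * ζ r) / (ζ x - ζ r)
    have hterm : ∀ x ∈ s,
        (∏ r ∈ (insert a s).erase x, (ζ x - q * ζ r) / (ζ x - ζ r)) / (ζ y - ζ x) =
          ((ζ y - q * ζ a) * (c x / (ζ y - ζ x)) - (1 - q) * ζ a * (c x / (ζ a - ζ x))) /
            (ζ y - ζ a) := by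
      intro x hx
      have hax : a ≠ x := fun h => ha (h ▸ hx)
      have hyx : y ≠ x := fun h => hys (h ▸ hx)
      rw [erase_insert_of_ne hax, prod_insert (by simp [ha])]
      have h1 := hne hax
      have h2 := hne hyx
      change _ * c x / _ = _
      have h3 : ζ x - ζ a = -(ζ a - ζ x) := by ring
      rw [h3]
      field_simp
      ring
    rw [prod_insert ha, sum_insert ha, erase_insert ha, card_insert_of_notMem ha,
      sum_congr rfl hterm, ← sum_div, sum_sub_distrib, ← mul_sum, ← mul_sum, ihy, iha]
    field_simp
    ring

/-- `Σ_{x ∈ s} ∏_{r ∈ s, r ≠ x} (ζ_x − qζ_r)/(ζ_x − ζ_r) = 1 + q + … + q^{|s|−1}`. -/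
theorem sum_prod_erase_eq_geom_sum {K X : Type*} [Field K] [DecidableEq X] (q : K) (ζ : X → K)
    (hζ : Function.Injective ζ) (s : Finset X) :
    ∑ x ∈ s, ∏ r ∈ s.erase x, (ζ x - q * ζ r) / (ζ x - ζ r) = ∑ i ∈ range #s, q ^ i := by
  induction s using Finset.induction_on with
  | empty => simp
  | insert a s ha ih =>
    have hterm : ∀ x ∈ s,
        ∏ r ∈ (insert a s).erase x, (ζ x - q * ζ r) / (ζ x - ζ r) =
          (∏ r ∈ s.erase x, (ζ x - q * ζ r) / (ζ x - ζ r)) - (1 - q) * ζ a *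
            ((∏ r ∈ s.erase x, (ζ x - q * ζ r) / (ζ x - ζ r)) / (ζ a - ζ x)) := by
      intro x hx
      have hax : a ≠ x := fun h => ha (h ▸ hx)
      rw [erase_insert_of_ne hax, prod_insert (by simp [ha])]
      have h1 : ζ a - ζ x ≠ 0 := sub_ne_zero.2 (hζ.ne hax)
      have h3 : ζ x - ζ a = -(ζ a - ζ x) := by ring
      rw [h3]
      field_simp
      ring
    rw [sum_insert ha, erase_insert ha, card_insert_of_notMem ha, sum_congr rfl hterm,
      sum_sub_distrib, ← mul_sum, ih, prod_eq_pow_add_sum_residues q ζ hζ s a ha,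
      sum_range_succ]
    ring

/-- The weight of a partial arrangement `κ`: the product of `w` over all ordered pairs `(a, b)`
where `a` is a value of `κ` and `b` either occurs later in `κ` or does not occur in `κ`. -/
def arrangementWeight {K : Type*} [CommRing K] {m n : ℕ} (w : Fin m → Fin m → K)
    (κ : Fin n → Fin m) : K :=
  (∏ j : Fin n, ∏ r ∈ Finset.univ.filter fun r : Fin m => ∀ j' : Fin n, κ j' ≠ r, w (κ j) r) *
    ∏ α : Fin n, ∏ β ∈ Finset.Ioi α, w (κ α) (κ β)

theorem arrangementWeight_snoc {K : Type*} [CommRing K] {m n : ℕ} (w : Fin m → Fin m → K)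
    (κ : Fin n → Fin m) (x : Fin m) (hx : ∀ j, κ j ≠ x) :
    arrangementWeight w (Fin.snoc κ x : Fin (n + 1) → Fin m) = arrangementWeight w κ *
      ∏ r ∈ (Finset.univ.filter fun r : Fin m => ∀ j' : Fin n, κ j' ≠ r).erase x, w x r := by
  have hfilter : (Finset.univ.filter fun r : Fin m =>
      ∀ j' : Fin (n + 1), (Fin.snoc κ x : Fin (n + 1) → Fin m) j' ≠ r) =
      (Finset.univ.filter fun r : Fin m => ∀ j' : Fin n, κ j' ≠ r).erase x := by
    ext r
    simp [Fin.forall_fin_succ', and_comm, eq_comm]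
  have hIoi : ∀ {k : ℕ} (α : Fin k) (g : Fin k → K),
      ∏ β ∈ Ioi α, g β = ∏ β, if α < β then g β else 1 := fun α g => by
    rw [← prod_filter]
    congr 1
    ext
    simp
  have hmem : x ∈ Finset.univ.filter fun r : Fin m => ∀ j' : Fin n, κ j' ≠ r := by simpa using hx
  have hsplit := prod_congr (rfl : (univ : Finset (Fin n)) = univ)
    fun j _ => (mul_prod_erase _ (w (κ j)) hmem).symm
  unfold arrangementWeight
  rw [hfilter, hsplit]
  simp only [hIoi, Fin.prod_univ_castSucc, Fin.snoc_castSucc, Fin.snoc_last,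
    Fin.castSucc_lt_castSucc_iff, Fin.castSucc_lt_last, if_true, lt_irrefl, if_false,
    Fin.not_lt.2 (Fin.le_last _), prod_const_one, mul_one, prod_mul_distrib]
  ring

theorem sum_injective_snoc {K : Type*} [Field K] (q : K) {m n : ℕ}
    (ζ : Fin m → K) (hζ : Function.Injective ζ) (H : (Fin n → Fin m) → K) :
    (∑ κ : Fin (n + 1) → Fin m, if Function.Injective κ then
      H (Fin.init κ) *
        arrangementWeight (fun a b => (ζ a - q * ζ b) / (ζ a - ζ b)) κ else 0) =
    (∑ i ∈ range (m - n), q ^ i) * ∑ κ : Fin n → Fin m, if Function.Injective κ then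
      H κ * arrangementWeight (fun a b => (ζ a - q * ζ b) / (ζ a - ζ b)) κ else 0 := by
  rw [← (Fin.snocEquiv fun _ : Fin (n + 1) => Fin m).sum_comp, Fintype.sum_prod_type_right,
    mul_sum]
  refine sum_congr rfl fun κ _ => ?_
  have hsnoc : ∀ x, Fin.snocEquiv (fun _ : Fin (n + 1) => Fin m) (x, κ) =
      (Fin.snoc κ x : Fin (n + 1) → Fin m) := fun _ => rfl
  have hinit : ∀ x, Fin.init (Fin.snoc κ x : Fin (n + 1) → Fin m) = κ :=
    fun x => Fin.init_snoc (α := fun _ => Fin m) x κ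
  simp only [hsnoc, hinit, Fin.snoc_injective_iff]
  by_cases hκ : Function.Injective κ
  · have hcard : #(Finset.univ.filter fun r : Fin m => ∀ j' : Fin n, κ j' ≠ r) = m - n := by
      have : (Finset.univ.filter fun r : Fin m => ∀ j' : Fin n, κ j' ≠ r) =
          (univ.image κ)ᶜ := by ext; simp
      rw [this, card_compl, card_image_of_injective _ hκ]
      simp
    rw [← hcard, ← sum_prod_erase_eq_geom_sum q ζ hζ, sum_mul, sum_filter]
    refine sum_congr rfl fun x _ => ?_
    by_cases hx : ∀ j, κ j ≠ x
    · have hx' : x ∉ Set.range κ := by simpa using hx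
      rw [if_pos ⟨hκ, hx'⟩, if_pos hx, if_pos hκ, arrangementWeight_snoc _ _ _ hx]
      ring
    · have hx' : ¬ x ∉ Set.range κ := by simpa using hx
      rw [if_neg fun h => hx' h.2, if_neg hx]
  · simp [hκ]

theorem sum_injective_add {K : Type*} [Field K] (q : K) {m n : ℕ} (d : ℕ)
    (ζ : Fin m → K) (hζ : Function.Injective ζ) (H : (Fin n → Fin m) → K) :
    (∑ κ : Fin (n + d) → Fin m, if Function.Injective κ then
      H (fun i => κ (Fin.castAdd d i)) *
        arrangementWeight (fun a b => (ζ a - q * ζ b) / (ζ a - ζ b)) κ else 0) =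
    (∏ t ∈ range d, ∑ i ∈ range (m - n - t), q ^ i) *
      ∑ κ : Fin n → Fin m, if Function.Injective κ then
        H κ * arrangementWeight (fun a b => (ζ a - q * ζ b) / (ζ a - ζ b)) κ else 0 := by
  induction d with
  | zero => simp
  | succ d ih =>
    have h := sum_injective_snoc (n := n + d) q ζ hζ fun κ => H fun i => κ (Fin.castAdd d i)
    rw [ih] at h
    rw [prod_range_succ, mul_comm (∏ t ∈ range d, _), mul_assoc, Nat.sub_sub]
    exact h

theorem sum_perm_eq_sum_injective {K : Type*} [AddCommMonoid K] {m : ℕ}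
    (G : (Fin m → Fin m) → K) :
    ∑ σ : Equiv.Perm (Fin m), G σ =
      ∑ κ : Fin m → Fin m, if Function.Injective κ then G κ else 0 := by
  rw [← sum_filter]
  refine sum_bij (fun σ _ => σ) (fun σ _ => by simpa using σ.injective)
    (fun σ _ τ _ h => DFunLike.coe_injective h) (fun κ hκ => ?_) fun _ _ => rfl
  exact ⟨Equiv.ofBijective κ (Finite.injective_iff_bijective.1 (by simpa using hκ)),
    mem_univ _, rfl⟩

theorem sum_strictMono_perm_eq_sum_injective {K : Type*} [AddCommMonoid K] {m n : ℕ}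
    (G : (Fin n → Fin m) → K) :
    (∑ ι : Fin n → Fin m, if StrictMono ι then ∑ σ : Equiv.Perm (Fin n), G (ι ∘ σ) else 0) =
      ∑ κ : Fin n → Fin m, if Function.Injective κ then G κ else 0 := by
  rw [← sum_filter, ← sum_filter, ← sum_product']
  refine sum_bij (fun p _ => p.1 ∘ p.2) (fun p hp => ?_) (fun p hp p' hp' h => ?_)
    (fun κ hκ => ?_) fun _ _ => rfl
  · simp only [mem_product, mem_filter, mem_univ, true_and, and_true] at hp ⊢
    exact hp.injective.comp p.2.injective
  · simp only [mem_product, mem_filter, mem_univ, true_and, and_true] at hp hp'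
    have hι : p.1 = p'.1 := by
      refine (StrictMono.range_inj hp hp').1 ?_
      have := congrArg Set.range h
      simpa only [EquivLike.range_comp] using this
    refine Prod.ext hι (Equiv.ext fun i => hp.injective ?_)
    simpa [hι] using congrFun h i
  · simp only [mem_filter, mem_univ, true_and] at hκ
    refine ⟨(κ ∘ Tuple.sort κ, (Tuple.sort κ)⁻¹), ?_, ?_⟩
    · simpa using (Tuple.monotone_sort κ).strictMono_of_injective
        (hκ.comp (Tuple.sort κ).injective)
    · ext i
      simp

/-- Permuting an arrangement does not change which values occur in it. -/
theorem arrangementWeight_comp_perm {K : Type*} [CommRing K] {m n : ℕ} (w : Fin m → Fin m → K)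
    (ι : Fin n → Fin m) (σ : Equiv.Perm (Fin n)) :
    arrangementWeight w (ι ∘ σ) =
      (∏ j : Fin n, ∏ r ∈ Finset.univ.filter fun r : Fin m => ∀ j' : Fin n, ι j' ≠ r,
        w (ι j) r) * ∏ α : Fin n, ∏ β ∈ Finset.Ioi α, w (ι (σ α)) (ι (σ β)) := by
  have hfilter : (Finset.univ.filter fun r : Fin m => ∀ j' : Fin n, (ι ∘ σ) j' ≠ r) =
      Finset.univ.filter fun r : Fin m => ∀ j' : Fin n, ι j' ≠ r := by
    ext r
    simpa using σ.forall_congr_left (p := fun j => ¬ ι (σ j) = r)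
  unfold arrangementWeight
  rw [hfilter]
  congr 1
  exact Equiv.prod_comp σ fun j =>
    ∏ r ∈ Finset.univ.filter fun r : Fin m => ∀ j' : Fin n, ι j' ≠ r, w (ι j) r

/-- A full arrangement omits no value. -/
theorem arrangementWeight_of_surjective {K : Type*} [CommRing K] {m n : ℕ}
    (w : Fin m → Fin m → K) (κ : Fin n → Fin m) (hκ : Function.Surjective κ) :
    arrangementWeight w κ = ∏ α : Fin n, ∏ β ∈ Finset.Ioi α, w (κ α) (κ β) := by
  have hfilter : (Finset.univ.filter fun r : Fin m => ∀ j' : Fin n, κ j' ≠ r) = ∅ := by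
    ext r
    simpa using hκ r
  simp [arrangementWeight, hfilter]

/-- **Partial symmetrization identity**: for pairwise distinct `ζ₁, …, ζ_m` in a field `K`
and arbitrary functions `f₁, …, f_ℓ : K → K` (`ℓ ≤ m`),
`Σ_{σ ∈ S_m} ∏_{i=1}^{ℓ} f_i(ζ_{σ(i)}) ∏_{α<β} (ζ_{σ(α)} − qζ_{σ(β)})/(ζ_{σ(α)} − ζ_{σ(β)})
  = [m−ℓ]_q! · Σ_{J = {j₁<…<j_ℓ}} ∏_{j∈J, r∉J} (ζ_j − qζ_r)/(ζ_j − ζ_r)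
     · Σ_{σ' ∈ S_ℓ} ∏_i f_i(ζ_{j_{σ'(i)}}) ∏_{α<β} (ζ_{j_{σ'(α)}} − qζ_{j_{σ'(β)}})/(ζ_{j_{σ'(α)}} − ζ_{j_{σ'(β)}})`. -/
theorem statement18 {K : Type*} [Field K] (q : K) (m ℓ : ℕ) (hm : 1 ≤ m) (hℓ : ℓ ≤ m)
    (ζ : Fin m → K) (hζ : Function.Injective ζ) (f : Fin ℓ → K → K) :
    (∑ σ : Equiv.Perm (Fin m),
        (∏ i : Fin ℓ, f i (ζ (σ (Fin.castLE hℓ i)))) *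
          ∏ α : Fin m, ∏ β ∈ Finset.Ioi α,
            (ζ (σ α) - q * ζ (σ β)) / (ζ (σ α) - ζ (σ β))) =
      qfact q (m - ℓ) *
        ∑ ι : Fin ℓ → Fin m,
          if StrictMono ι then
            (∏ j : Fin ℓ, ∏ r ∈ Finset.univ.filter fun r : Fin m => ∀ j' : Fin ℓ, ι j' ≠ r,
                (ζ (ι j) - q * ζ r) / (ζ (ι j) - ζ r)) *
              ∑ σ' : Equiv.Perm (Fin ℓ),
                (∏ i : Fin ℓ, f i (ζ (ι (σ' i)))) *
                  ∏ α : Fin ℓ, ∏ β ∈ Finset.Ioi α,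
                    (ζ (ι (σ' α)) - q * ζ (ι (σ' β))) / (ζ (ι (σ' α)) - ζ (ι (σ' β)))
          else 0 := by
  obtain ⟨d, rfl⟩ := Nat.exists_eq_add_of_le hℓ
  have hq : qfact q (ℓ + d - ℓ) =
      ∏ t ∈ range d, ∑ i ∈ range (ℓ + d - ℓ - t), q ^ i := by
    rw [qfact, Nat.add_sub_cancel_left, ← prod_range_reflect]
    refine prod_congr rfl fun t ht => ?_
    have := mem_range.1 ht
    rw [show d - 1 - t + 1 = d - t by omega]
  have h := sum_injective_add q d ζ hζ fun κ => ∏ i : Fin ℓ, f i (ζ (κ i))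
  rw [← hq, ← sum_perm_eq_sum_injective, ← sum_strictMono_perm_eq_sum_injective] at h
  convert h using 1
  · refine sum_congr rfl fun σ _ => ?_
    rw [arrangementWeight_of_surjective _ _ σ.surjective]
    rfl
  · congr 1
    refine sum_congr rfl fun ι _ => ?_
    congr 1
    rw [mul_sum]
    refine sum_congr rfl fun σ _ => ?_
    rw [arrangementWeight_comp_perm]
    simp only [Function.comp_apply]
    ring

end
end

section
/- Inversion-summation factorization. Let R be a commutative ring, let (X_i)_{i ≥ 1} be elements of R, let k ≥ 1, and let n₁ ≤ n₂ ≤ … ≤ n_k be positive integers. For a tuple (i₁, …, i_k) define inv_{≤p} := #{ j < p : i_j > i_p }. Then Σ over all tuples (i₁, …, i_k) of pairwise distinct indices with 1 ≤ i_p ≤ n_p for each p, of ∏_{p=1}^{k} X_{i_p + inv_{≤p}}, equals ∏_{p=1}^{k} (X_p + X_{p+1} + … + X_{n_p}), where a factor with n_p < p is the empty sum 0. Equivalently, the map (i₁, …, i_k) ↦ (i₁, i₂ + inv_{≤2}, …, i_k + inv_{≤k}) is a bijection from the set of such pairwise distinct tuples onto the box {(j₁, …, j_k) : p ≤ j_p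 ≤ n_p for all p}. -/
noncomputable section

open Finset
open scoped Classical

/-- The inversion count `inv_{≤p}(i) = #{j < p : i_j > i_p}`. -/
def invp {k : ℕ} (i : Fin k → ℕ) (p : Fin k) : ℕ :=
  (Finset.univ.filter fun j : Fin k => j < p ∧ i p < i j).card

/-- `x` shifted up by the number of elements of `A` exceeding it. -/
def shiftAbove (A : Finset ℕ) (x : ℕ) : ℕ := x + #{a ∈ A | x < a}

theorem shiftAbove_strictMonoOn (A : Finset ℕ) : StrictMonoOn (shiftAbove A) {x | x ∉ A} := by
  intro x _ y hy hxy
  have hsub : {a ∈ A | x < a} ⊆ {a ∈ A | y < a} ∪ Ioo x y := by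
    intro a ha
    have : a ≠ y := fun h => hy (h ▸ (mem_filter.1 ha).1)
    simp only [mem_union, mem_filter, mem_Ioo] at ha ⊢
    grind
  have hcard := (card_le_card hsub).trans (card_union_le _ _)
  rw [Nat.card_Ioo] at hcard
  unfold shiftAbove
  lia

theorem shiftAbove_mem_Icc {A : Finset ℕ} {m x : ℕ} (hA : A ⊆ Icc 1 m)
    (hx : x ∈ Icc 1 m \ A) : shiftAbove A x ∈ Icc (#A + 1) m := by
  obtain ⟨hxm, hxA⟩ := mem_sdiff.1 hx
  rw [mem_Icc] at hxm
  have hupper : #{a ∈ A | x < a} ≤ #(Ioc x m) := card_le_card fun a ha => by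
    have := mem_Icc.1 (hA (mem_filter.1 ha).1)
    exact mem_Ioc.2 ⟨(mem_filter.1 ha).2, this.2⟩
  have hlower : #{a ∈ A | ¬ x < a} ≤ #(Ico 1 x) := card_le_card fun a ha => by
    obtain ⟨haA, hax⟩ := mem_filter.1 ha
    have := mem_Icc.1 (hA haA)
    have : a ≠ x := fun h => hxA (h ▸ haA)
    exact mem_Ico.2 (by lia)
  have hsum := card_filter_add_card_filter_not (s := A) (fun a => x < a)
  rw [Nat.card_Ioc] at hupper
  rw [Nat.card_Ico] at hlower
  rw [mem_Icc]
  unfold shiftAbove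
  lia

theorem image_shiftAbove {A : Finset ℕ} {m : ℕ} (hA : A ⊆ Icc 1 m) :
    (Icc 1 m \ A).image (shiftAbove A) = Icc (#A + 1) m := by
  refine eq_of_subset_of_card_le (image_subset_iff.2 fun x hx => shiftAbove_mem_Icc hA hx) ?_
  rw [card_image_of_injOn, card_sdiff_of_subset hA, Nat.card_Icc, Nat.card_Icc]
  · lia
  · exact (shiftAbove_strictMonoOn A).injOn.mono fun x hx => (mem_sdiff.1 hx).2

theorem add_invp_eq_shiftAbove {k : ℕ} {i : Fin k → ℕ} (hi : Function.Injective i) (p : Fin k) :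
    i p + invp i p = shiftAbove ((Iio p).image i) (i p) := by
  unfold invp shiftAbove
  rw [filter_image, card_image_of_injective _ hi]
  congr 2
  ext j
  simp

theorem apply_notMem_image_Iio {k : ℕ} {i : Fin k → ℕ} (hi : Function.Injective i) (p : Fin k) :
    i p ∉ (Iio p).image i := by
  simp [hi.eq_iff]

theorem invp_snoc_castSucc {k : ℕ} (i : Fin k → ℕ) (x : ℕ) (p : Fin k) :
    invp (Fin.snoc i x : Fin (k + 1) → ℕ) p.castSucc = invp i p := by
  unfold invp
  refine Eq.trans ?_ (card_map Fin.castSuccEmb)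
  congr 1
  ext j
  induction j using Fin.lastCases with
  | last => simp [(Fin.le_last p.castSucc).not_gt]
  | cast j => simp

theorem invp_snoc_last {k : ℕ} {i : Fin k → ℕ} (hi : Function.Injective i) (x : ℕ) :
    invp (Fin.snoc i x : Fin (k + 1) → ℕ) (Fin.last k) = #{a ∈ univ.image i | x < a} := by
  unfold invp
  rw [filter_image, card_image_of_injective _ hi]
  refine Eq.trans ?_ (card_map Fin.castSuccEmb)
  congr 1
  ext j
  induction j using Fin.lastCases with
  | last => simp
  | cast j => simp [Fin.castSucc_lt_last]

theorem mapsTo_add_invp {k : ℕ} {n : Fin k → ℕ} (hmono : Monotone n) :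
    Set.MapsTo (fun (i : Fin k → ℕ) (p : Fin k) => i p + invp i p)
      {i : Fin k → ℕ | Function.Injective i ∧ ∀ p : Fin k, 1 ≤ i p ∧ i p ≤ n p}
      {j : Fin k → ℕ | ∀ p : Fin k, p.val + 1 ≤ j p ∧ j p ≤ n p} := by
  rintro i ⟨hi, hbd⟩ p
  have hA : (Iio p).image i ⊆ Icc 1 (n p) := image_subset_iff.2 fun q hq =>
    mem_Icc.2 ⟨(hbd q).1, (hbd q).2.trans (hmono (mem_Iio.1 hq).le)⟩
  have hmem := shiftAbove_mem_Icc hA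
    (mem_sdiff.2 ⟨mem_Icc.2 (hbd p), apply_notMem_image_Iio hi p⟩)
  rw [card_image_of_injective _ hi, Fin.card_Iio, mem_Icc, ← add_invp_eq_shiftAbove hi] at hmem
  exact hmem

theorem injOn_add_invp (k : ℕ) :
    Set.InjOn (fun (i : Fin k → ℕ) (p : Fin k) => i p + invp i p)
      {i : Fin k → ℕ | Function.Injective i} := by
  intro i hi i' hi' h
  funext p
  induction p using WellFoundedLT.induction with
  | ind p ih =>
    have himage : (Iio p).image i = (Iio p).image i' :=
      image_congr fun q hq => ih q (by simpa using hq)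
    have hp := congrFun h p
    simp only [add_invp_eq_shiftAbove hi, add_invp_eq_shiftAbove hi', himage] at hp
    refine (shiftAbove_strictMonoOn _).injOn ?_ (apply_notMem_image_Iio hi' p) hp
    exact himage ▸ apply_notMem_image_Iio hi p

theorem surjOn_add_invp {k : ℕ} {n : Fin k → ℕ} (hmono : Monotone n) :
    Set.SurjOn (fun (i : Fin k → ℕ) (p : Fin k) => i p + invp i p)
      {i : Fin k → ℕ | Function.Injective i ∧ ∀ p : Fin k, 1 ≤ i p ∧ i p ≤ n p}
      {j : Fin k → ℕ | ∀ p : Fin k, p.val + 1 ≤ j p ∧ j p ≤ n p} := by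
  induction k with
  | zero =>
    exact fun j _ => ⟨j, ⟨Function.injective_of_subsingleton j, nofun⟩, Subsingleton.elim _ _⟩
  | succ k ih =>
    intro j hj
    obtain ⟨i, ⟨hi, hbd⟩, hij⟩ := ih (n := fun p => n p.castSucc)
      (fun p q hpq => hmono (Fin.castSucc_le_castSucc_iff.2 hpq))
      (show (fun p => j p.castSucc) ∈ _ from fun p => hj p.castSucc)
    have hA : univ.image i ⊆ Icc 1 (n (Fin.last k)) := image_subset_iff.2 fun q _ =>
      mem_Icc.2 ⟨(hbd q).1, (hbd q).2.trans (hmono (Fin.le_last _))⟩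
    have hlast : j (Fin.last k) ∈ Icc (#(univ.image i) + 1) (n (Fin.last k)) := by
      rw [card_image_of_injective _ hi, card_univ, Fintype.card_fin]
      exact mem_Icc.2 (hj (Fin.last k))
    rw [← image_shiftAbove hA] at hlast
    obtain ⟨x, hx, hxj⟩ := mem_image.1 hlast
    obtain ⟨hxn, hxi⟩ := mem_sdiff.1 hx
    refine ⟨Fin.snoc i x, ⟨Fin.snoc_injective_iff.2 ⟨hi, by simpa using hxi⟩, fun p => ?_⟩,
      funext fun p => ?_⟩
    · induction p using Fin.lastCases with
      | last => simpa using hxn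
      | cast p => simpa using hbd p
    · induction p using Fin.lastCases with
      | last => simpa [invp_snoc_last hi, shiftAbove] using hxj
      | cast p => simpa [invp_snoc_castSucc] using congrFun hij p

/-- **Inversion-summation factorization**: for elements `X₁, X₂, …` of a commutative ring
and positive integers `n₁ ≤ … ≤ n_k`,
`Σ_{(i₁,…,i_k) pairwise distinct, 1 ≤ i_p ≤ n_p} ∏_p X_{i_p + inv_{≤p}}
  = ∏_p (X_p + X_{p+1} + … + X_{n_p})`;
equivalently, `(i₁,…,i_k) ↦ (i₁, i₂ + inv_{≤2}, …, i_k + inv_{≤k})` is a bijection from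
the set of such pairwise distinct tuples onto the box `{(j₁,…,j_k) : p ≤ j_p ≤ n_p}`
(all indices being `1`-based). -/
theorem statement19 {R : Type*} [CommRing R] (X : ℕ → R) (k : ℕ) (hk : 1 ≤ k)
    (n : Fin k → ℕ) (hmono : Monotone n) (hpos : ∀ p, 1 ≤ n p) :
    ((∑ i ∈ Fintype.piFinset fun p : Fin k => Finset.Icc 1 (n p),
        if Function.Injective i then ∏ p : Fin k, X (i p + invp i p) else 0) =
      ∏ p : Fin k, ∑ j ∈ Finset.Icc (p.val + 1) (n p), X j) ∧
    Set.BijOn (fun (i : Fin k → ℕ) (p : Fin k) => i p + invp i p)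
      {i : Fin k → ℕ | Function.Injective i ∧ ∀ p : Fin k, 1 ≤ i p ∧ i p ≤ n p}
      {j : Fin k → ℕ | ∀ p : Fin k, p.val + 1 ≤ j p ∧ j p ≤ n p} := by
  have hbij : Set.BijOn (fun (i : Fin k → ℕ) (p : Fin k) => i p + invp i p)
      {i : Fin k → ℕ | Function.Injective i ∧ ∀ p : Fin k, 1 ≤ i p ∧ i p ≤ n p}
      {j : Fin k → ℕ | ∀ p : Fin k, p.val + 1 ≤ j p ∧ j p ≤ n p} :=
    ⟨mapsTo_add_invp hmono, (injOn_add_invp k).mono fun _ hi => hi.1, surjOn_add_invp hmono⟩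
  refine ⟨?_, hbij⟩
  rw [← sum_filter, prod_univ_sum]
  have hsource : ((Fintype.piFinset fun p => Icc 1 (n p)).filter Function.Injective :
      Set (Fin k → ℕ)) = {i | Function.Injective i ∧ ∀ p, 1 ≤ i p ∧ i p ≤ n p} := by
    ext i
    simp [and_comm]
  have htarget : (Fintype.piFinset fun p : Fin k => Icc (p.val + 1) (n p) :
      Set (Fin k → ℕ)) = {j | ∀ p, p.val + 1 ≤ j p ∧ j p ≤ n p} := by
    ext j
    simp [Pi.le_def, forall_and]
  rw [← hsource, ← htarget] at hbij
  exact sum_nbij _ hbij.mapsTo hbij.injOn hbij.surjOn fun _ _ => rfl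

end
end
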